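/- Let n ≥ 1, 1 ≤ l ≤ n, C_l > 0, C_u > 0, and let γ ∈ ℝⁿ satisfy γᵢ ∈ {−1,+1} for all i. Let D be the diagonal n×n matrix with Dᵢᵢ = 1/(2C_l) for i ≤ l and Dᵢᵢ = 1/(2C_u) for i > l, and set C = (D + γγᵀ)⁻¹. Then for every real symmetric positive semidefinite n×n matrix X with Xᵢᵢ ≥ 1 for all i, one has ⟨C, X⟩ ≥ γᵀ C γ = ⟨C, γγᵀ⟩. In particular, since γγᵀ is positive semidefinite with unit diagonal, the pair (γ, γγᵀ) is an optimal solution of the basic SDP relaxation, i.e., the SDP relaxation is tight for the ideal kernel. -/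

import Mathlib

open Matrix

/-!
Put `c = 1 + γᵀD⁻¹γ`. Then `L = c⁻¹D⁻¹`, which is diagonal, is a dual certificate for the
relaxation: `L ≤ C` in the Loewner order and `C` agrees with `L` at `γ`. Indeed, by the
Sherman–Morrison formula, `c • (C - L) = (γᵀD⁻¹γ) • D⁻¹ - (D⁻¹γ)(D⁻¹γ)ᵀ`, which is positive
semidefinite by the Cauchy–Schwarz inequality for the form `D⁻¹` and annihilates `γ`. Hence
`⟨C, X⟩ ≥ ⟨L, X⟩ ≥ γᵀLγ = γᵀCγ`, where the second inequality is the constraint `Xᵢᵢ ≥ γᵢ²`.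
-/

section ShermanMorrison

variable {n K : Type*} [Fintype n] [DecidableEq n] [Field K]

lemma inv_add_vecMulVec {A : Matrix n n K} (hA : IsUnit A) {u v : n → K}
    (h : 1 + v ⬝ᵥ A⁻¹ *ᵥ u ≠ 0) :
    (A + vecMulVec u v)⁻¹ =
      A⁻¹ - (1 + v ⬝ᵥ A⁻¹ *ᵥ u)⁻¹ • vecMulVec (A⁻¹ *ᵥ u) (v ᵥ* A⁻¹) := by
  have hA' : A * A⁻¹ = 1 := mul_nonsing_inv A ((isUnit_iff_isUnit_det A).1 hA)
  have hmul : (A + vecMulVec u v) * vecMulVec (A⁻¹ *ᵥ u) (v ᵥ* A⁻¹) =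
      (1 + v ⬝ᵥ A⁻¹ *ᵥ u) • vecMulVec u (v ᵥ* A⁻¹) := by
    rw [add_mul, mul_vecMulVec, mulVec_mulVec, hA', one_mulVec, vecMulVec_mul_vecMulVec,
      vecMulVec_smul, add_smul, one_smul]
  refine inv_eq_right_inv ?_
  rw [mul_sub, mul_smul_comm, hmul, inv_smul_smul₀ h, add_mul, hA', vecMulVec_mul,
    add_sub_cancel_right]

lemma inv_add_vecMulVec_mulVec {A : Matrix n n K} (hA : IsUnit A) {u v : n → K}
    (h : 1 + v ⬝ᵥ A⁻¹ *ᵥ u ≠ 0) :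
    (A + vecMulVec u v)⁻¹ *ᵥ u = (1 + v ⬝ᵥ A⁻¹ *ᵥ u)⁻¹ • A⁻¹ *ᵥ u := by
  rw [inv_add_vecMulVec hA h, sub_mulVec, smul_mulVec, vecMulVec_mulVec, op_smul_eq_smul,
    ← dotProduct_mulVec]
  match_scalars
  field_simp
  ring

end ShermanMorrison

section Loewner

open scoped ComplexOrder MatrixOrder

variable {n 𝕜 : Type*} [Fintype n] [RCLike 𝕜]

lemma trace_mul_nonneg_of_posSemidef {X P : Matrix n n 𝕜} (hX : X.PosSemidef)
    (hP : P.PosSemidef) : 0 ≤ (X * P).trace := by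
  obtain ⟨m, v, rfl⟩ := posSemidef_iff_eq_sum_vecMulVec.1 hX
  rw [Finset.sum_mul, trace_sum]
  refine Finset.sum_nonneg fun k _ => ?_
  rw [vecMulVec_mul, trace_vecMulVec, dotProduct_comm, ← dotProduct_mulVec]
  exact hP.dotProduct_mulVec_nonneg (v k)

lemma trace_mul_le_trace_mul_of_posSemidef {X L C : Matrix n n 𝕜} (hX : X.PosSemidef)
    (hLC : L ≤ C) : (X * L).trace ≤ (X * C).trace := by
  rw [← sub_nonneg, ← trace_sub, ← mul_sub]
  exact trace_mul_nonneg_of_posSemidef hX hLC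

lemma dotProduct_mulVec_le_trace_mul_of_certificate {X L C : Matrix n n 𝕜} {u : n → 𝕜}
    (hLC : L ≤ C) (hu : C *ᵥ u = L *ᵥ u) (hX : X.PosSemidef)
    (hL : star u ⬝ᵥ L *ᵥ u ≤ (X * L).trace) :
    star u ⬝ᵥ C *ᵥ u ≤ (X * C).trace :=
  calc star u ⬝ᵥ C *ᵥ u = star u ⬝ᵥ L *ᵥ u := by rw [hu]
    _ ≤ (X * L).trace := hL
    _ ≤ (X * C).trace := trace_mul_le_trace_mul_of_posSemidef hX hLC

lemma vecMulVec_mulVec_le_smul {B : Matrix n n 𝕜} (hB : B.PosSemidef) (u : n → 𝕜) :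
    vecMulVec (B *ᵥ u) (star (B *ᵥ u)) ≤ (star u ⬝ᵥ B *ᵥ u) • B := by
  classical
  rcases (hB.dotProduct_mulVec_nonneg u).eq_or_lt with hs | hs
  · rw [← hs, (hB.dotProduct_mulVec_zero_iff u).1 hs.symm, zero_vecMulVec, zero_smul]
  have hu : star (B *ᵥ u) = star u ᵥ* B := by rw [star_mulVec, hB.isHermitian.eq]
  set s := star u ⬝ᵥ B *ᵥ u with hs_def
  -- The `B`-orthogonal projection along `u`.
  let P : Matrix n n 𝕜 := 1 - s⁻¹ • vecMulVec u (star (B *ᵥ u))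
  have hBP : B * P = B - s⁻¹ • vecMulVec (B *ᵥ u) (star (B *ᵥ u)) := by
    rw [mul_sub, mul_one, mul_smul_comm, mul_vecMulVec]
  have huBP : star u ᵥ* (B * P) = 0 := by
    rw [hBP, vecMul_sub, ← hu, vecMul_smul, vecMul_vecMulVec, ← hs_def, inv_smul_smul₀ hs.ne',
      sub_self]
  have hPBP : Pᴴ * B * P = B * P := by
    rw [mul_assoc, conjTranspose_sub, conjTranspose_one, conjTranspose_smul,
      conjTranspose_vecMulVec, star_star, sub_mul, one_mul, smul_mul_assoc, vecMulVec_mul, huBP,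
      vecMulVec_zero, smul_zero, sub_zero]
  have hdiff : s • B - vecMulVec (B *ᵥ u) (star (B *ᵥ u)) = s • (Pᴴ * B * P) := by
    rw [hPBP, hBP, smul_sub, smul_inv_smul₀ hs.ne']
  rw [Matrix.le_iff, hdiff]
  exact (hB.conjTranspose_mul_mul_same P).smul hs.le

variable [DecidableEq n]

lemma smul_inv_le_inv_add_vecMulVec {A : Matrix n n 𝕜} (hA : A.PosDef) (u : n → 𝕜) :
    (1 + star u ⬝ᵥ A⁻¹ *ᵥ u)⁻¹ • A⁻¹ ≤ (A + vecMulVec u (star u))⁻¹ := by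
  set s := star u ⬝ᵥ A⁻¹ *ᵥ u
  have hs0 : 0 ≤ s := hA.inv.posSemidef.dotProduct_mulVec_nonneg u
  have hc : 0 < 1 + s := by positivity
  have hw : star u ᵥ* A⁻¹ = star (A⁻¹ *ᵥ u) := by
    rw [star_mulVec, hA.inv.isHermitian.eq]
  have hdiff : (A + vecMulVec u (star u))⁻¹ - (1 + s)⁻¹ • A⁻¹ =
      (1 + s)⁻¹ • (s • A⁻¹ - vecMulVec (A⁻¹ *ᵥ u) (star (A⁻¹ *ᵥ u))) := by
    rw [inv_add_vecMulVec hA.isUnit hc.ne', hw]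
    match_scalars
    · field_simp
      ring
    · ring
  rw [Matrix.le_iff, hdiff]
  exact PosSemidef.smul (vecMulVec_mulVec_le_smul hA.inv.posSemidef u) (by positivity)

lemma dotProduct_inv_add_vecMulVec_mulVec_le_trace {A X : Matrix n n 𝕜} (hA : A.PosDef)
    {u : n → 𝕜} (hX : X.PosSemidef) (huX : star u ⬝ᵥ A⁻¹ *ᵥ u ≤ (X * A⁻¹).trace) :
    star u ⬝ᵥ (A + vecMulVec u (star u))⁻¹ *ᵥ u ≤
      (X * (A + vecMulVec u (star u))⁻¹).trace := by
  have hc : 0 < 1 + star u ⬝ᵥ A⁻¹ *ᵥ u :=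
    add_pos_of_pos_of_nonneg one_pos (hA.inv.posSemidef.dotProduct_mulVec_nonneg u)
  refine dotProduct_mulVec_le_trace_mul_of_certificate (smul_inv_le_inv_add_vecMulVec hA u)
    (by rw [inv_add_vecMulVec_mulVec hA.isUnit hc.ne', smul_mulVec]) hX ?_
  rw [smul_mulVec, dotProduct_smul, mul_smul_comm, trace_smul]
  exact smul_le_smul_of_nonneg_left huX (inv_nonneg.2 hc.le)

end Loewner

lemma dotProduct_diagonal_mulVec_le_trace {ι R : Type*} [Fintype ι] [DecidableEq ι]
    [CommSemiring R] [PartialOrder R] [IsOrderedRing R] {e u : ι → R} (he : 0 ≤ e)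
    {X : Matrix ι ι R} (hX : ∀ i, u i * u i ≤ X i i) :
    u ⬝ᵥ diagonal e *ᵥ u ≤ (Xᵀ * diagonal e).trace :=
  calc u ⬝ᵥ diagonal e *ᵥ u = ∑ i, u i * u i * e i := by
        simp only [dotProduct, mulVec_diagonal, mul_comm (e _), mul_assoc]
    _ ≤ ∑ i, X i i * e i := Finset.sum_le_sum fun i _ =>
        mul_le_mul_of_nonneg_right (hX i) (he i)
    _ = (Xᵀ * diagonal e).trace := by
        simp only [trace, diag_apply, mul_diagonal, transpose_apply]

theorem ideal_kernel_sdp_tight_general {ι : Type*} [Fintype ι] [DecidableEq ι]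
    {d : ι → ℝ} (hd : ∀ i, 0 < d i) (γ : ι → ℝ)
    {C : Matrix ι ι ℝ} (hC : C = (diagonal d + vecMulVec γ γ)⁻¹) :
    (vecMulVec γ γ).PosSemidef ∧
    (∀ i, vecMulVec γ γ i i = γ i * γ i) ∧
    γ ⬝ᵥ C *ᵥ γ = ((vecMulVec γ γ)ᵀ * C).trace ∧
    (∀ X : Matrix ι ι ℝ, X.PosSemidef → (∀ i, γ i * γ i ≤ X i i) →
      (Xᵀ * C).trace ≥ γ ⬝ᵥ C *ᵥ γ) := by
  refine ⟨posSemidef_vecMulVec_self_star γ, fun _ => rfl, ?_, fun X hX hdiag => ?_⟩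
  · rw [transpose_vecMulVec, vecMulVec_mul, trace_vecMulVec, dotProduct_mulVec, dotProduct_comm]
  have hinv : (diagonal d)⁻¹ = diagonal d⁻¹ := inv_eq_right_inv <| by
    simp [diagonal_mul_diagonal, (hd _).ne']
  have hfeas : γ ⬝ᵥ (diagonal d)⁻¹ *ᵥ γ ≤ (Xᵀ * (diagonal d)⁻¹).trace :=
    hinv ▸ dotProduct_diagonal_mulVec_le_trace (fun i => inv_nonneg.2 (hd i).le) hdiag
  rw [hC]
  exact dotProduct_inv_add_vecMulVec_mulVec_le_trace (PosDef.diagonal hd) hX.transpose hfeas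

/-- Tightness of the basic SDP relaxation for the ideal kernel: with `γᵢ ∈ {−1,+1}`, `D` the
diagonal matrix with entries `1/(2C_l)` (labeled indices `i < l`) and `1/(2C_u)` (unlabeled
indices `i ≥ l`), and `C = (D + γγᵀ)⁻¹`, the matrix `γγᵀ` is positive semidefinite with unit
diagonal, `γᵀCγ = ⟨C, γγᵀ⟩` (trace inner product), and every real symmetric positive
semidefinite `X` with `Xᵢᵢ ≥ 1` for all `i` satisfies `⟨C, X⟩ ≥ γᵀCγ`. -/
theorem ideal_kernel_sdp_tight (n l : ℕ) (hn : 1 ≤ n) (hl : 1 ≤ l) (hln : l ≤ n)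
    (Cl Cu : ℝ) (hCl : 0 < Cl) (hCu : 0 < Cu)
    (γ : Fin n → ℝ) (hγ : ∀ i, γ i = -1 ∨ γ i = 1)
    (D : Matrix (Fin n) (Fin n) ℝ)
    (hD : D = Matrix.diagonal (fun i : Fin n =>
      if (i : ℕ) < l then 1 / (2 * Cl) else 1 / (2 * Cu)))
    (C : Matrix (Fin n) (Fin n) ℝ) (hC : C = (D + vecMulVec γ γ)⁻¹) :
    (vecMulVec γ γ).PosSemidef ∧
    (∀ i : Fin n, vecMulVec γ γ i i = 1) ∧
    γ ⬝ᵥ C *ᵥ γ = ((vecMulVec γ γ)ᵀ * C).trace ∧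
    (∀ X : Matrix (Fin n) (Fin n) ℝ, X.PosSemidef → (∀ i, 1 ≤ X i i) →
      (Xᵀ * C).trace ≥ γ ⬝ᵥ C *ᵥ γ) := by
  have hd : ∀ i : Fin n, 0 < if (i : ℕ) < l then 1 / (2 * Cl) else 1 / (2 * Cu) := fun i => by
    split_ifs <;> positivity
  have hγ_sq : ∀ i, γ i * γ i = 1 := fun i => mul_self_eq_one_iff.2 (hγ i).symm
  simpa only [hγ_sq] using ideal_kernel_sdp_tight_general hd γ (hD ▸ hC)
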